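/- Let ≈ be the least congruence on PGA-programs that contains associativity of concatenation ((X;Y);Z ≈ X;(Y;Z)) and the unfolding law (X^ω ≈ X;X^ω), and that is closed under the proof rule: if X ≈ Y;X then X ≈ Y^ω. Then ≈ validates PGA2 ((X^n)^ω ≈ X^ω for n ≥ 1), PGA3 (X^ω;Y ≈ X^ω) and PGA4 ((X;Y)^ω ≈ X;(Y;X)^ω). -/

import Mathlib

/-- Primitive instructions over a set `A` of basic instructions:
basic instructions `a`, positive tests `+a`, negative tests `-a`,
jump instructions `#k` and the termination instruction `!`. -/
inductive PrimInstr (A : Type) : Type where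
  | basic (a : A)
  | pos (a : A)
  | neg (a : A)
  | jump (k : Nat)
  | halt
deriving DecidableEq

/-- PGA-programs over `A`: primitive instructions, concatenation `X;Y`
and repetition `X^ω`. -/
inductive PGA (A : Type) : Type where
  | prim (u : PrimInstr A)
  | seq (X Y : PGA A)
  | rep (X : PGA A)
deriving DecidableEq

/-- `X.pow n` is the power `X^n` for `n ≥ 1`: `X^1 = X` and `X^(n+1) = X ; X^n`.
(The value at `0` is irrelevant and set to `X`; all statements only use `n ≥ 1`.) -/
def PGA.pow {A : Type} (X : PGA A) : Nat → PGA A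
  | 0 => X
  | 1 => X
  | n+2 => X.seq (X.pow (n+1))

/-- The least congruence on PGA-programs containing associativity of
concatenation and the unfolding law, closed under the proof rule
`X ≈ Y ; X → X ≈ Y^ω`. -/
inductive UApprox {A : Type} : PGA A → PGA A → Prop
  | refl (X : PGA A) : UApprox X X
  | symm {X Y : PGA A} : UApprox X Y → UApprox Y X
  | trans {X Y Z : PGA A} : UApprox X Y → UApprox Y Z → UApprox X Z
  | seq_congr {X X' Y Y' : PGA A} : UApprox X X' → UApprox Y Y' → UApprox (X.seq Y) (X'.seq Y')
  | rep_congr {X Y : PGA A} : UApprox X Y → UApprox X.rep Y.rep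
  | assoc (X Y Z : PGA A) : UApprox ((X.seq Y).seq Z) (X.seq (Y.seq Z))
  | unfold (X : PGA A) : UApprox X.rep (X.seq X.rep)
  | fix {X Y : PGA A} : UApprox X (Y.seq X) → UApprox X Y.rep

/-!
The unfolding law says that `X^ω` solves `Z ≈ X ; Z`, and the proof rule says that every solution
is congruent to it. Each of PGA2, PGA3 and PGA4 therefore follows once one of its sides is shown to
solve the equation that characterizes the other side.
-/

namespace UApprox

variable {A : Type}

instance : Trans (UApprox (A := A)) UApprox UApprox where
  trans := trans

theorem seq_congr_left {X X' : PGA A} (h : UApprox X X') (Y : PGA A) :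
    UApprox (X.seq Y) (X'.seq Y) :=
  seq_congr h (refl Y)

theorem seq_congr_right (X : PGA A) {Y Y' : PGA A} (h : UApprox Y Y') :
    UApprox (X.seq Y) (X.seq Y') :=
  seq_congr (refl X) h

theorem pow_succ_seq_of_seq {X Z : PGA A} (h : UApprox Z (X.seq Z)) (n : ℕ) :
    UApprox Z ((X.pow (n + 1)).seq Z) := by
  induction n with
  | zero => exact h
  | succ n ih =>
    calc
      UApprox Z (X.seq Z) := h
      UApprox _ (X.seq ((X.pow (n + 1)).seq Z)) := seq_congr_right X ih
      UApprox _ ((X.pow (n + 2)).seq Z) := (assoc X (X.pow (n + 1)) Z).symm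

theorem pow_succ_rep (X : PGA A) (n : ℕ) : UApprox (X.pow (n + 1)).rep X.rep :=
  (fix (pow_succ_seq_of_seq (unfold X) n)).symm

theorem rep_seq_absorb (X Y : PGA A) : UApprox (X.rep.seq Y) X.rep :=
  fix <| calc
    UApprox (X.rep.seq Y) ((X.seq X.rep).seq Y) := seq_congr_left (unfold X) Y
    UApprox _ (X.seq (X.rep.seq Y)) := assoc X X.rep Y

theorem seq_of_seq_rotate {X Y Z : PGA A} (h : UApprox Z ((Y.seq X).seq Z)) :
    UApprox (X.seq Z) ((X.seq Y).seq (X.seq Z)) :=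
  calc
    UApprox (X.seq Z) (X.seq ((Y.seq X).seq Z)) := seq_congr_right X h
    UApprox _ (X.seq (Y.seq (X.seq Z))) := seq_congr_right X (assoc Y X Z)
    UApprox _ ((X.seq Y).seq (X.seq Z)) := (assoc X Y (X.seq Z)).symm

theorem seq_rep_rotate (X Y : PGA A) : UApprox (X.seq Y).rep (X.seq (Y.seq X).rep) :=
  (fix (seq_of_seq_rotate (unfold (Y.seq X)))).symm

end UApprox

/-- The least congruence containing associativity and the unfolding law and
closed under the rule `X ≈ Y ; X ⇒ X ≈ Y^ω` validates PGA2, PGA3 and PGA4. -/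
theorem unfolding_plus_rule_validates_PGA2_3_4 (A : Type) :
    (∀ (X : PGA A) (n : ℕ), 1 ≤ n → UApprox ((X.pow n).rep) X.rep) ∧
    (∀ X Y : PGA A, UApprox (X.rep.seq Y) X.rep) ∧
    (∀ X Y : PGA A, UApprox ((X.seq Y).rep) (X.seq ((Y.seq X).rep))) := by
  refine ⟨fun X n hn => ?_, UApprox.rep_seq_absorb, UApprox.seq_rep_rotate⟩
  obtain ⟨m, rfl⟩ := Nat.exists_eq_add_of_le' hn
  exact UApprox.pow_succ_rep X m
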